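/- Let m, n ≥ 1 and set N = m + n. Consider the graph Γ with vertex set Σ and an edge between σ and σ·τ_c whenever 1 ≤ c ≤ N − 1 and both σ and σ·τ_c lie in Σ. Then every closed walk in Γ (a sequence v_0, v_1, ..., v_ℓ of vertices with consecutive vertices adjacent and v_ℓ = v_0) can be transformed into the constant walk at v_0 by finitely many applications, in either direction, of the following moves: (i) replacing a consecutive subsequence v, w, v by v; (ii) replacing a consecutive subsequence v, v·τ_c, v·τ_c·τ_d by v, v·τ_d, v·τ_d·τ_c, where 1 ≤ c, d ≤ N − 1, |c − d| ≥ 2, and all four generators v, v·τ_c, v·τ_d, v·τ_c·τ_d lie in Σ; (iii) replacing a consecutive subsequence v, v·τ_c, v·τ_c·τ_{c+1}, v·τ_c·τ_{c+1}·τ_c by v, v·τ_{c+1}, v·τ_{c+1}·τ_c, v·τ_{c+1}·τ_c·τ_{c+1}, where 1 ≤ c ≤ N − 2 and all six generators v, v·τ_c, v·τ_c·τ_{c+1}, v·τ_c·τ_{c+1}·τ_c, v·τ_{c+1}·τ_c, v·τ_{c+1} lie in Σ. (This expresses that the 2-complex W_{m,n} obtained from Γ by attaching square and hexagon 2-cells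 is simply connected; note v·τ_c·τ_{c+1}·τ_c = v·τ_{c+1}·τ_c·τ_{c+1}.) -/

import Mathlib

/-- The set `Σ` of generators `σ` (0-indexed: columns/rows `0,…,m+n−1`) with
`σ(j) ∈ {0,…,m}` for `j < m` and `σ(j) ∈ {m−1,…,m+n−1}` for `j ≥ m`. -/
def GenSet (m n : ℕ) : Set (Equiv.Perm (Fin (m + n))) :=
  {σ | ∀ j : Fin (m + n), ((j : ℕ) < m → (σ j : ℕ) ≤ m) ∧ (m ≤ (j : ℕ) → m ≤ (σ j : ℕ) + 1)}

/-- The column `c` as an element of `Fin N`, given `c + 1 < N`. -/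
def colFin {N : ℕ} (c : ℕ) (hc : c + 1 < N) : Fin N := ⟨c, Nat.lt_of_succ_lt hc⟩

/-- The column `c + 1` as an element of `Fin N`, given `c + 1 < N`. -/
def colFin' {N : ℕ} (c : ℕ) (hc : c + 1 < N) : Fin N := ⟨c + 1, hc⟩

/-- The generator `σ·τ_c = σ^{c,c+1}`. -/
def tmul {N : ℕ} (σ : Equiv.Perm (Fin N)) (c : ℕ) (hc : c + 1 < N) : Equiv.Perm (Fin N) :=
  (Equiv.swap (colFin c hc) (colFin' c hc)).trans σ

/-- Adjacency in the graph `Γ`: `σ` and `σ·τ_c` are adjacent when both lie in `Σ`. -/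
def GridAdj (m n : ℕ) (σ σ' : Equiv.Perm (Fin (m + n))) : Prop :=
  σ ∈ GenSet m n ∧ σ' ∈ GenSet m n ∧ ∃ (c : ℕ) (hc : c + 1 < m + n), σ' = tmul σ c hc

/-- The elementary moves on walks in `Γ`: (i) removing a backtrack `v, w, v ↦ v`;
(ii) replacing one side of a square (for distant transpositions `τ_c`, `τ_d`) by the other;
(iii) replacing one side of a hexagon (for the braid relation between `τ_c` and `τ_{c+1}`)
by the other. -/
inductive GridMove (m n : ℕ) :
    List (Equiv.Perm (Fin (m + n))) → List (Equiv.Perm (Fin (m + n))) → Prop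
  | backtrack (pre post : List (Equiv.Perm (Fin (m + n)))) (v w : Equiv.Perm (Fin (m + n))) :
      v ∈ GenSet m n → w ∈ GenSet m n → (∃ (c : ℕ) (hc : c + 1 < m + n), w = tmul v c hc) →
      GridMove m n (pre ++ v :: w :: v :: post) (pre ++ v :: post)
  | square (pre post : List (Equiv.Perm (Fin (m + n)))) (v : Equiv.Perm (Fin (m + n)))
      (c d : ℕ) (hc : c + 1 < m + n) (hd : d + 1 < m + n) :
      (c + 2 ≤ d ∨ d + 2 ≤ c) →
      v ∈ GenSet m n → tmul v c hc ∈ GenSet m n → tmul v d hd ∈ GenSet m n →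
      tmul (tmul v c hc) d hd ∈ GenSet m n →
      GridMove m n (pre ++ v :: tmul v c hc :: tmul (tmul v c hc) d hd :: post)
        (pre ++ v :: tmul v d hd :: tmul (tmul v d hd) c hc :: post)
  | hexagon (pre post : List (Equiv.Perm (Fin (m + n)))) (v : Equiv.Perm (Fin (m + n)))
      (c : ℕ) (hc1 : c + 1 < m + n) (hc2 : c + 1 + 1 < m + n) :
      v ∈ GenSet m n → tmul v c hc1 ∈ GenSet m n →
      tmul (tmul v c hc1) (c + 1) hc2 ∈ GenSet m n →
      tmul (tmul (tmul v c hc1) (c + 1) hc2) c hc1 ∈ GenSet m n →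
      tmul (tmul v (c + 1) hc2) c hc1 ∈ GenSet m n →
      tmul v (c + 1) hc2 ∈ GenSet m n →
      GridMove m n
        (pre ++ v :: tmul v c hc1 :: tmul (tmul v c hc1) (c + 1) hc2 ::
          tmul (tmul (tmul v c hc1) (c + 1) hc2) c hc1 :: post)
        (pre ++ v :: tmul v (c + 1) hc2 :: tmul (tmul v (c + 1) hc2) c hc1 ::
          tmul (tmul (tmul v (c + 1) hc2) c hc1) (c + 1) hc2 :: post)

/-!
Call a step `σ → σ·τ_c` of `Γ` descending if `σ(c) > σ(c + 1)`. It moves the larger entry to the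
right and the smaller one to the left, which the constraints defining `Σ` always permit; so `Σ` is
closed under descending steps, and every edge of `Γ` is descending in one of its two directions.
Descending steps terminate, and two different descending steps from the same vertex are two sides
of a square or a hexagon whose other sides descend as well, hence stay in `Σ`.

The conclusion is then the homotopical form of Newman's lemma. By Noetherian induction any two
maximal descending walks from a vertex are homotopic. Pushing a closed walk `p` at `v` along maximal
descending walks, one edge at a time, shows that `p` followed by a maximal descending walk `k` is
homotopic to `k` alone; retracing `k` then contracts `p`.

Homotopy classes of vertex sequences form a monoid under concatenation, in which homotopies become
equations, and a walk is the product of the classes of its vertices. Walks are joined at a common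
vertex by dropping it from the second one.
-/

section HomotopicalNewman

variable {α M : Type*} [Monoid M] {D : α → α → Prop} {f : α → M}

/-- A maximal descending walk `v, w₁, …, w_k` for the relation `D`, encoded by its starting vertex
`v` and the list `[w₁, …, w_k]` of its further vertices. -/
inductive IsMaxDescent (D : α → α → Prop) : α → List α → Prop
  | nil {v : α} : (∀ w, ¬ D v w) → IsMaxDescent D v []
  | cons {v w : α} {k : List α} : D v w → IsMaxDescent D w k → IsMaxDescent D v (w :: k)

/-- A branching `a ← v → b` is joined by a cell if descending walks from `a` and `b` lead to a
common vertex `w` in such a way that both walks from `v` to `w` have the same value in `M`. -/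
def IsJoinedByCell (D : α → α → Prop) (f : α → M) (v a b : α) : Prop :=
  ∃ (p q : List α) (w : α), (a :: (p ++ [w])).IsChain D ∧ (b :: (q ++ [w])).IsChain D ∧
    ((v :: a :: (p ++ [w])).map f).prod = ((v :: b :: (q ++ [w])).map f).prod

/-- Coherent local confluence, the hypothesis of the homotopical Newman lemma: evaluating walks by
the product of the values of `f` at their vertices, backtracks are trivial and every branching is
joined by a cell. -/
structure IsCoherentlyConfluent (D : α → α → Prop) (f : α → M) : Prop where
  backtrack : ∀ ⦃v w⦄, Relation.SymmGen D v w → f v * f w * f v = f v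
  branch : ∀ ⦃v a b⦄, D v a → D v b → a ≠ b → IsJoinedByCell D f v a b

theorem IsJoinedByCell.symm {v a b : α} (h : IsJoinedByCell D f v a b) :
    IsJoinedByCell D f v b a := by
  obtain ⟨p, q, w, hp, hq, hpq⟩ := h
  exact ⟨q, p, w, hq, hp, hpq.symm⟩

theorem exists_isMaxDescent (hwf : WellFounded (flip D)) (v : α) :
    ∃ k, IsMaxDescent D v k := by
  induction v using hwf.induction with
  | _ v ih =>
    by_cases h : ∃ w, D v w
    · obtain ⟨w, hw⟩ := h
      obtain ⟨k, hk⟩ := ih w hw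
      exact ⟨w :: k, .cons hw hk⟩
    · exact ⟨[], .nil (not_exists.mp h)⟩

theorem IsMaxDescent.of_isChain_append {w : α} {k : List α} (hk : IsMaxDescent D w k)
    {p : List α} {v : α} (hp : (v :: (p ++ [w])).IsChain D) : IsMaxDescent D v (p ++ w :: k) := by
  induction p generalizing v with
  | nil => exact .cons (List.isChain_pair.mp hp) hk
  | cons a p ih =>
    obtain ⟨hva, hp⟩ := List.isChain_cons_cons.mp hp
    exact .cons hva (ih hp)

namespace IsCoherentlyConfluent

theorem prod_maxDescent_unique (hf : IsCoherentlyConfluent D f) (hwf : WellFounded (flip D))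
    {v : α} {k l : List α} (hk : IsMaxDescent D v k) (hl : IsMaxDescent D v l) :
    ((v :: k).map f).prod = ((v :: l).map f).prod := by
  induction v using hwf.induction generalizing k l with
  | _ v ih =>
    cases hk with
    | nil hv =>
      cases hl with
      | nil => rfl
      | cons hvb _ => exact absurd hvb (hv _)
    | @cons _ a k hva hk =>
      cases hl with
      | nil hv => exact absurd hva (hv _)
      | @cons _ b l hvb hl =>
        obtain rfl | hab := eq_or_ne a b
        · simpa using congrArg (f v * ·) (ih a hva hk hl)
        obtain ⟨p, q, w, hp, hq, hpq⟩ := hf.branch hva hvb hab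
        obtain ⟨r, hr⟩ := exists_isMaxDescent hwf w
        have hk' := ih a hva hk (hr.of_isChain_append hp)
        have hl' := ih b hvb hl (hr.of_isChain_append hq)
        simp only [List.map_cons, List.map_append, List.prod_cons, List.prod_append,
          List.map_nil, List.prod_nil, mul_one] at hpq hk' hl' ⊢
        calc f v * (f a * (k.map f).prod)
            = f v * (f a * ((p.map f).prod * f w)) * (r.map f).prod := by
              rw [hk']; simp only [mul_assoc]
          _ = f v * (f b * ((q.map f).prod * f w)) * (r.map f).prod := by rw [hpq]
          _ = f v * (f b * (l.map f).prod) := by rw [hl']; simp only [mul_assoc]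

theorem exists_prod_maxDescent_mul_eq (hf : IsCoherentlyConfluent D f)
    {v : α} {k : List α} (hk : IsMaxDescent D v k) :
    ∃ y, ((v :: k).map f).prod * y = f v := by
  induction hk with
  | nil => exact ⟨1, by simp⟩
  | @cons v w k hvw _ ih =>
    obtain ⟨y, hy⟩ := ih
    refine ⟨y * f v, ?_⟩
    calc ((v :: w :: k).map f).prod * (y * f v)
        = f v * (((w :: k).map f).prod * y) * f v := by
          simp only [List.map_cons, List.prod_cons, mul_assoc]
      _ = f v := by rw [hy, hf.backtrack (.of_rel hvw)]

theorem prod_walk_append_maxDescent (hf : IsCoherentlyConfluent D f)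
    (hwf : WellFounded (flip D)) {u v : α} {t k l : List α}
    (ht : (v :: t).IsChain (Relation.SymmGen D)) (hu : u ∈ (v :: t).getLast?)
    (hk : IsMaxDescent D u k) (hl : IsMaxDescent D v l) :
    ((v :: t ++ k).map f).prod = ((v :: l).map f).prod := by
  induction t generalizing v l with
  | nil =>
    obtain rfl : v = u := by simpa using hu
    exact hf.prod_maxDescent_unique hwf hk hl
  | cons w t ih =>
    obtain ⟨hvw, ht⟩ := List.isChain_cons_cons.mp ht
    rw [List.getLast?_cons_cons] at hu
    rw [List.cons_append, List.map_cons, List.prod_cons]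
    rcases hvw with hdown | hup
    · obtain ⟨r, hr⟩ := exists_isMaxDescent hwf w
      rw [ih ht hu hr, ← List.prod_cons, ← List.map_cons]
      exact hf.prod_maxDescent_unique hwf (.cons hdown hr) hl
    · rw [ih ht hu (.cons hup hl)]
      simp only [List.map_cons, List.prod_cons, ← mul_assoc]
      rw [hf.backtrack (.of_rel_symm hup)]

theorem prod_closed_walk (hf : IsCoherentlyConfluent D f) (hwf : WellFounded (flip D))
    {v : α} {l : List α} (hl : l.IsChain (Relation.SymmGen D))
    (hhead : v ∈ l.head?) (hlast : v ∈ l.getLast?) : (l.map f).prod = f v := by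
  obtain ⟨t, rfl⟩ := List.head?_eq_some_iff.mp hhead
  obtain ⟨s, hs⟩ := List.getLast?_eq_some_iff.mp hlast
  obtain ⟨k, hk⟩ := exists_isMaxDescent hwf v
  obtain ⟨y, hy⟩ := hf.exists_prod_maxDescent_mul_eq hk
  have hcancel := hf.prod_walk_append_maxDescent hwf hl hlast hk hk
  calc ((v :: t).map f).prod
      = (s.map f).prod * (((v :: k).map f).prod * y) := by rw [hs, hy]; simp
    _ = ((v :: t ++ k).map f).prod * y := by rw [hs]; simp [mul_assoc]
    _ = f v := by rw [hcancel, hy]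

end IsCoherentlyConfluent

end HomotopicalNewman

section WordCongruence

variable {α : Type*} {R : List α → List α → Prop}

/-- Stability of a rewriting relation on words under prepending and appending words. -/
def IsContextClosed (R : List α → List α → Prop) : Prop :=
  ∀ ⦃a b⦄, R a b → ∀ p q, R (p ++ a ++ q) (p ++ b ++ q)

theorem IsContextClosed.eqvGen (hR : IsContextClosed R) :
    IsContextClosed (Relation.EqvGen R) := by
  intro a b h p q
  induction h with
  | rel a b h => exact .rel _ _ (hR h p q)
  | refl a => exact .refl _
  | symm a b _ ih => exact .symm _ _ ih
  | trans a b c _ _ ih₁ ih₂ => exact .trans _ _ _ ih₁ ih₂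

/-- The congruence on the free monoid generated by a context-closed rewriting relation. Context
closure makes it the mere equivalence closure of the relation. -/
def wordCon (hR : IsContextClosed R) : Con (FreeMonoid α) where
  r a b := Relation.EqvGen R a.toList b.toList
  iseqv := (Relation.EqvGen.is_equivalence R).comap FreeMonoid.toList
  mul' {a b c d} hab hcd := by
    have h₁ := hR.eqvGen hab [] c.toList
    have h₂ := hR.eqvGen hcd b.toList []
    simp only [List.nil_append, List.append_nil] at h₁ h₂
    exact h₁.trans _ _ _ h₂

/-- The class of a one-letter word modulo `wordCon`. -/
def letterClass (hR : IsContextClosed R) (a : α) : (wordCon hR).Quotient :=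
  (FreeMonoid.of a : FreeMonoid α)

theorem prod_map_letterClass (hR : IsContextClosed R) (l : List α) :
    (l.map (letterClass hR)).prod = (FreeMonoid.ofList l : FreeMonoid α) := by
  induction l with
  | nil => rfl
  | cons a l ih =>
    rw [List.map_cons, List.prod_cons, ih, FreeMonoid.ofList_cons, Con.coe_mul, letterClass]

theorem prod_map_letterClass_eq_iff (hR : IsContextClosed R) {l l' : List α} :
    (l.map (letterClass hR)).prod = (l'.map (letterClass hR)).prod ↔
      Relation.ReflTransGen (Relation.SymmGen R) l l' := by
  rw [prod_map_letterClass, prod_map_letterClass, Con.eq, Relation.EqvGen.reflTransGen_symmGen]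
  rfl

theorem prod_map_letterClass_eq_of_rel (hR : IsContextClosed R) {l l' : List α} (h : R l l') :
    (l.map (letterClass hR)).prod = (l'.map (letterClass hR)).prod :=
  (prod_map_letterClass_eq_iff hR).mpr (.single (.of_rel h))

end WordCongruence

section AdjacentTranspositions

theorem swap_braid {α : Type*} [DecidableEq α] {x y z : α} (hxy : x ≠ y) (hxz : x ≠ z)
    (hyz : y ≠ z) :
    Equiv.swap x y * Equiv.swap y z * Equiv.swap x y =
      Equiv.swap y z * Equiv.swap x y * Equiv.swap y z := by
  rw [Equiv.swap_mul_swap_mul_swap hxy hxz, Equiv.swap_comm x y, Equiv.swap_comm y z,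
    Equiv.swap_mul_swap_mul_swap hyz.symm hxz.symm, Equiv.swap_comm]

variable {N : ℕ} (σ : Equiv.Perm (Fin N)) {c d : ℕ} (hc : c + 1 < N) (hd : d + 1 < N)
  (hc' : c + 1 + 1 < N)

theorem tmul_eq_mul_swap : tmul σ c hc = σ * Equiv.swap (colFin c hc) (colFin' c hc) :=
  rfl

theorem tmul_colFin : tmul σ c hc (colFin c hc) = σ (colFin' c hc) := by
  simp [tmul]

theorem tmul_colFin' : tmul σ c hc (colFin' c hc) = σ (colFin c hc) := by
  simp [tmul]

theorem tmul_of_ne {j : Fin N} (hj : j ≠ colFin c hc) (hj' : j ≠ colFin' c hc) :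
    tmul σ c hc j = σ j := by
  rw [tmul_eq_mul_swap, Equiv.Perm.mul_apply, Equiv.swap_apply_of_ne_of_ne hj hj']

theorem tmul_tmul_self : tmul (tmul σ c hc) c hc = σ := by
  rw [tmul_eq_mul_swap, tmul_eq_mul_swap, mul_assoc, Equiv.swap_mul_self, mul_one]

theorem tmul_comm (h : c + 1 < d) : tmul (tmul σ c hc) d hd = tmul (tmul σ d hd) c hc := by
  have hdisj : (Equiv.swap (colFin c hc) (colFin' c hc)).Disjoint
      (Equiv.swap (colFin d hd) (colFin' d hd)) :=
    Equiv.Perm.disjoint_swap_swap (by simp [colFin, colFin']; omega)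
  simp only [tmul_eq_mul_swap, mul_assoc, hdisj.commute.eq]

theorem tmul_braid :
    tmul (tmul (tmul σ c hc) (c + 1) hc') c hc =
      tmul (tmul (tmul σ (c + 1) hc') c hc) (c + 1) hc' := by
  have h₁₂ : colFin c hc ≠ colFin' c hc := by simp [colFin, colFin']
  have h₁₃ : colFin c hc ≠ colFin' (c + 1) hc' := by simp [colFin, colFin']; omega
  have h₂₃ : colFin' c hc ≠ colFin' (c + 1) hc' := by simp [colFin']
  have hmiddle : colFin (c + 1) hc' = colFin' c hc := rfl
  simpa only [tmul_eq_mul_swap, hmiddle, mul_assoc] using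
    congrArg (σ * ·) (swap_braid h₁₂ h₁₃ h₂₃)

/-- `σ` has a descent at column `c`, that is, `σ(c) > σ(c + 1)`. -/
def IsDescentAt (σ : Equiv.Perm (Fin N)) (c : ℕ) (hc : c + 1 < N) : Prop :=
  σ (colFin' c hc) < σ (colFin c hc)

variable {σ hc hd hc'}

theorem isDescentAt_or_isDescentAt_tmul (σ : Equiv.Perm (Fin N)) (hc : c + 1 < N) :
    IsDescentAt σ c hc ∨ IsDescentAt (tmul σ c hc) c hc := by
  have hne : σ (colFin' c hc) ≠ σ (colFin c hc) := σ.injective.ne (by simp [colFin, colFin'])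
  simpa only [IsDescentAt, tmul_colFin, tmul_colFin'] using hne.lt_or_gt

theorem isDescentAt_tmul_iff_of_far (h : c + 1 < d ∨ d + 1 < c) :
    IsDescentAt (tmul σ c hc) d hd ↔ IsDescentAt σ d hd := by
  rw [IsDescentAt, IsDescentAt, tmul_of_ne, tmul_of_ne] <;>
    simp only [colFin, colFin', ne_eq, Fin.mk.injEq] <;> omega

theorem IsDescentAt.tmul_succ (h : IsDescentAt σ c hc) (h' : IsDescentAt σ (c + 1) hc') :
    IsDescentAt (tmul σ c hc) (c + 1) hc' := by
  have houter : σ (colFin' (c + 1) hc') < σ (colFin c hc) := h'.trans h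
  grind [IsDescentAt, tmul, colFin, colFin']

theorem IsDescentAt.succ_tmul (h : IsDescentAt σ c hc) (h' : IsDescentAt σ (c + 1) hc') :
    IsDescentAt (tmul σ (c + 1) hc') c hc := by
  have houter : σ (colFin' (c + 1) hc') < σ (colFin c hc) := h'.trans h
  grind [IsDescentAt, tmul, colFin, colFin']

theorem isDescentAt_tmul_tmul_succ_iff :
    IsDescentAt (tmul (tmul σ c hc) (c + 1) hc') c hc ↔ IsDescentAt σ (c + 1) hc' := by
  grind [IsDescentAt, tmul, colFin, colFin']

theorem isDescentAt_succ_tmul_succ_tmul_iff :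
    IsDescentAt (tmul (tmul σ (c + 1) hc') c hc) (c + 1) hc' ↔ IsDescentAt σ c hc := by
  grind [IsDescentAt, tmul, colFin, colFin']

theorem toLex_tmul_lt (h : IsDescentAt σ c hc) : toLex ⇑(tmul σ c hc) < toLex ⇑σ :=
  Pi.lex_desc (Fin.mk_le_mk.mpr c.le_succ) h

end AdjacentTranspositions

section Grid

variable {m n : ℕ} {σ τ : Equiv.Perm (Fin (m + n))} {c d : ℕ} {hc : c + 1 < m + n}
  {hd : d + 1 < m + n}

theorem tmul_mem_genSet (hσ : σ ∈ GenSet m n) (h : IsDescentAt σ c hc) :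
    tmul σ c hc ∈ GenSet m n := by
  have hlt : (σ (colFin' c hc) : ℕ) < σ (colFin c hc) := h
  obtain ⟨hleft, -⟩ := hσ (colFin c hc)
  obtain ⟨-, hright⟩ := hσ (colFin' c hc)
  intro j
  by_cases hj : j = colFin c hc
  · subst hj
    rw [tmul_colFin]
    exact ⟨fun hcm => hlt.le.trans (hleft hcm), fun hmc => hright (hmc.trans c.le_succ)⟩
  by_cases hj' : j = colFin' c hc
  · subst hj'
    rw [tmul_colFin']
    exact ⟨fun hcm => hleft (c.lt_succ_self.trans hcm),
      fun hmc => (hright hmc).trans (Nat.succ_le_succ hlt.le)⟩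
  rw [tmul_of_ne σ hc hj hj']
  exact hσ j

/-- The descending edges of `Γ`. -/
def GridDescent (m n : ℕ) (σ τ : Equiv.Perm (Fin (m + n))) : Prop :=
  σ ∈ GenSet m n ∧ ∃ (c : ℕ) (hc : c + 1 < m + n), IsDescentAt σ c hc ∧ τ = tmul σ c hc

theorem IsDescentAt.gridDescent (h : IsDescentAt σ c hc) (hσ : σ ∈ GenSet m n) :
    GridDescent m n σ (tmul σ c hc) :=
  ⟨hσ, c, hc, h, rfl⟩

theorem wellFounded_flip_gridDescent (m n : ℕ) : WellFounded (flip (GridDescent m n)) := by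
  refine Subrelation.wf ?_
    (InvImage.wf (fun σ : Equiv.Perm (Fin (m + n)) => toLex ⇑σ) wellFounded_lt)
  rintro _ σ ⟨_, c, hc, h, rfl⟩
  exact toLex_tmul_lt h

theorem GridAdj.symm (h : GridAdj m n σ τ) : GridAdj m n τ σ := by
  obtain ⟨hσ, hτ, c, hc, rfl⟩ := h
  exact ⟨hτ, hσ, c, hc, (tmul_tmul_self σ hc).symm⟩

theorem GridDescent.gridAdj (h : GridDescent m n σ τ) : GridAdj m n σ τ := by
  obtain ⟨hσ, c, hc, h, rfl⟩ := h
  exact ⟨hσ, tmul_mem_genSet hσ h, c, hc, rfl⟩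

theorem symmGen_gridDescent : Relation.SymmGen (GridDescent m n) = GridAdj m n := by
  ext σ τ
  refine ⟨fun h => h.elim GridDescent.gridAdj fun h => h.gridAdj.symm, ?_⟩
  rintro ⟨hσ, hτ, c, hc, rfl⟩
  obtain h | h := isDescentAt_or_isDescentAt_tmul σ hc
  · exact .of_rel (h.gridDescent hσ)
  · exact .of_rel_symm ⟨hτ, c, hc, h, (tmul_tmul_self σ hc).symm⟩

theorem isContextClosed_gridMove (m n : ℕ) : IsContextClosed (GridMove m n) := by
  intro a b h p q
  cases h with
  | backtrack pre post v w hv hw h =>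
    simpa using GridMove.backtrack (p ++ pre) (post ++ q) v w hv hw h
  | square pre post v c d hc hd hcd hv h₁ h₂ h₁₂ =>
    simpa using GridMove.square (p ++ pre) (post ++ q) v c d hc hd hcd hv h₁ h₂ h₁₂
  | hexagon pre post v c hc hc' hv h₁ h₁₂ h₁₂₁ h₂₁ h₂ =>
    simpa using GridMove.hexagon (p ++ pre) (post ++ q) v c hc hc' hv h₁ h₁₂ h₁₂₁ h₂₁ h₂

/-- The homotopy class of a one-vertex sequence, in the monoid of vertex sequences modulo the
elementary moves. -/
abbrev gridClass (m n : ℕ) :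
    Equiv.Perm (Fin (m + n)) → (wordCon (isContextClosed_gridMove m n)).Quotient :=
  letterClass (isContextClosed_gridMove m n)

theorem gridClass_backtrack (h : GridAdj m n σ τ) :
    gridClass m n σ * gridClass m n τ * gridClass m n σ = gridClass m n σ := by
  obtain ⟨hσ, hτ, h⟩ := h
  simpa [mul_assoc] using prod_map_letterClass_eq_of_rel (isContextClosed_gridMove m n)
    (.backtrack [] [] σ τ hσ hτ h)

theorem isJoinedByCell_square (hσ : σ ∈ GenSet m n) (hcd : c + 1 < d)
    (h : IsDescentAt σ c hc) (h' : IsDescentAt σ d hd) :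
    IsJoinedByCell (GridDescent m n) (gridClass m n) σ (tmul σ c hc) (tmul σ d hd) := by
  have hσc := tmul_mem_genSet hσ h
  have hσd := tmul_mem_genSet hσ h'
  have hcd_desc : IsDescentAt (tmul σ c hc) d hd := (isDescentAt_tmul_iff_of_far (.inl hcd)).mpr h'
  have hdc_desc : IsDescentAt (tmul σ d hd) c hc := (isDescentAt_tmul_iff_of_far (.inr hcd)).mpr h
  have hcomm := tmul_comm σ hc hd hcd
  refine ⟨[], [], tmul (tmul σ c hc) d hd,
    List.isChain_pair.mpr (hcd_desc.gridDescent hσc),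
    List.isChain_pair.mpr (hcomm ▸ hdc_desc.gridDescent hσd), ?_⟩
  have hmove := GridMove.square [] [] σ c d hc hd (.inl hcd) hσ hσc hσd
    (tmul_mem_genSet hσc hcd_desc)
  rw [← hcomm] at hmove
  exact prod_map_letterClass_eq_of_rel _ hmove

/- On the columns `c, c + 1, c + 2`, with entries `x > y > z`, the two sides of the hexagon are
`xyz → yxz → yzx → zyx` and `xyz → xzy → zxy → zyx`. -/
theorem isJoinedByCell_hexagon {hc' : c + 1 + 1 < m + n} (hσ : σ ∈ GenSet m n)
    (h : IsDescentAt σ c hc) (h' : IsDescentAt σ (c + 1) hc') :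
    IsJoinedByCell (GridDescent m n) (gridClass m n) σ (tmul σ c hc) (tmul σ (c + 1) hc') := by
  have h₁₂ := h.tmul_succ h'
  have h₂₁ := h.succ_tmul h'
  have h₁₂₁ := isDescentAt_tmul_tmul_succ_iff (hc := hc).mpr h'
  have h₂₁₂ := isDescentAt_succ_tmul_succ_tmul_iff (hc' := hc').mpr h
  have hσ₁ := tmul_mem_genSet hσ h
  have hσ₂ := tmul_mem_genSet hσ h'
  have hσ₁₂ := tmul_mem_genSet hσ₁ h₁₂
  have hσ₂₁ := tmul_mem_genSet hσ₂ h₂₁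
  have hbraid := tmul_braid σ hc hc'
  refine ⟨[_], [_], tmul (tmul (tmul σ c hc) (c + 1) hc') c hc,
    .cons_cons (h₁₂.gridDescent hσ₁) (List.isChain_pair.mpr (h₁₂₁.gridDescent hσ₁₂)),
    .cons_cons (h₂₁.gridDescent hσ₂)
      (List.isChain_pair.mpr (hbraid ▸ h₂₁₂.gridDescent hσ₂₁)), ?_⟩
  have hmove := GridMove.hexagon [] [] σ c hc hc' hσ hσ₁ hσ₁₂ (tmul_mem_genSet hσ₁₂ h₁₂₁) hσ₂₁ hσ₂
  rw [← hbraid] at hmove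
  exact prod_map_letterClass_eq_of_rel _ hmove

theorem isJoinedByCell_of_lt (hσ : σ ∈ GenSet m n) (hcd : c < d)
    (h : IsDescentAt σ c hc) (h' : IsDescentAt σ d hd) :
    IsJoinedByCell (GridDescent m n) (gridClass m n) σ (tmul σ c hc) (tmul σ d hd) := by
  obtain rfl | hcd := (Nat.succ_le_of_lt hcd).eq_or_lt
  · exact isJoinedByCell_hexagon hσ h h'
  · exact isJoinedByCell_square hσ hcd h h'

theorem isCoherentlyConfluent_gridDescent (m n : ℕ) :
    IsCoherentlyConfluent (GridDescent m n) (gridClass m n) where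
  backtrack σ τ h := gridClass_backtrack (symmGen_gridDescent ▸ h)
  branch := by
    rintro σ _ _ ⟨hσ, c, hc, h, rfl⟩ ⟨-, d, hd, h', rfl⟩ hne
    obtain hcd | rfl | hdc := lt_trichotomy c d
    · exact isJoinedByCell_of_lt hσ hcd h h'
    · exact absurd rfl hne
    · exact (isJoinedByCell_of_lt hσ hdc h' h).symm

end Grid

/-- Every closed walk in the graph `Γ` on `Σ` can be transformed into the constant walk
at its basepoint by finitely many elementary moves, applied in either direction; i.e. the
2-complex `W_{m,n}` is simply connected. -/
theorem closed_walks_contractible (m n : ℕ) (hm : 1 ≤ m) (hn : 1 ≤ n)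
    (v0 : Equiv.Perm (Fin (m + n))) (hv0 : v0 ∈ GenSet m n)
    (l : List (Equiv.Perm (Fin (m + n))))
    (hhead : l.head? = some v0) (hlast : l.getLast? = some v0)
    (hchain : l.Chain' (GridAdj m n)) (hmem : ∀ v ∈ l, v ∈ GenSet m n) :
    Relation.ReflTransGen (fun a b => GridMove m n a b ∨ GridMove m n b a) l [v0] := by
  rw [← symmGen_gridDescent] at hchain
  have hprod : (l.map (gridClass m n)).prod = gridClass m n v0 :=
    (isCoherentlyConfluent_gridDescent m n).prod_closed_walk (wellFounded_flip_gridDescent m n)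
      hchain hhead hlast
  exact (prod_map_letterClass_eq_iff (isContextClosed_gridMove m n)).mp (by simpa using hprod)
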